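/- arXiv:2207.08440 — 2 statements merged into one kernel-verified Lean document; each statement's English description precedes it below -/
import Mathlib

section
/- For each r ∈ (0,1] there exists a decreasing sequence {t_n}_{n=1}^∞ of positive reals converging to zero which belongs to ℓ^{r,∞}(ℕ) such that for every s < r/(r+1) there is NO constant C with ‖ sup_{n ∈ ℕ} |e^{i t_n □}f| ‖_{L²(B(0,1))} ≤ C ‖f‖_{H^s(ℝ²)} for all f ∈ H^s(ℝ²). -/
/-!
The sequence is `t_n = (n + 1)^{-1/r}`, for every `s` at once. It lies in `ℓ^{r,∞}`, and
Bernoulli's inequality bounds its gaps near a value `τ` by `O(τ^{1+r})` (`exists_powSeq_near`).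

The nonelliptic phase `x₀ξ₀ + x₁ξ₁ + tξ₀ξ₁` becomes, for `ξ₁` close to `N`, a transport phase
`(x₀ + tN)ξ₀` with speed `N`. Hence the datum whose Fourier transform is the indicator function of
`[0, N] × [N, N + 1]` evolves without cancellation near `x₀ = -tN`: its size there is at least
`N/2` when `|x₁| ≤ 1/4`, `|x₀ + tN| ≤ 1/(4N)` and `tN ≤ 1/4` (`le_norm_hypEvol_testDatum`).

For times up to `τ₀ = c N^{-2/(1+r)}` the gaps of `t_n` are at most `1/(4N²)`, so the translates
`-t_n N` are `1/(4N)`-dense in `[-τ₀N, 0]` and the maximal function is at least `N/2` on a set of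
measure comparable to `τ₀N` inside the unit ball (`maximal_testDatum_ge`). The square of its `L²`
norm is therefore at least a multiple of `N² · N^{1 - 2/(1+r)}`, whereas the squared `H^s` norm is
`O(N^{2σ} · N)` with `σ = max s 0` (`sobolevNormSq_testDatum_le`). A uniform bound would keep
`N^{2(r/(r+1) - σ)}` bounded as `N → ∞`, which is false since `σ < r/(r+1)`.
-/

open MeasureTheory Real Filter

noncomputable section

/-- The hyperbolic (nonelliptic) Schrödinger evolution `e^{it□}f` in `ℝ²`, expressed
through the Fourier transform `fhat` of the initial datum:
`e^{it□}f(x) = ∫ e^{i(x·ξ + t ξ₁ξ₂)} f̂(ξ) dξ`. -/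
def hypEvol (fhat : EuclideanSpace ℝ (Fin 2) → ℂ) (t : ℝ)
    (x : EuclideanSpace ℝ (Fin 2)) : ℂ :=
  ∫ ξ : EuclideanSpace ℝ (Fin 2),
    Complex.exp (Complex.I * ((x 0 * ξ 0 + x 1 * ξ 1 + t * (ξ 0 * ξ 1) : ℝ) : ℂ)) * fhat ξ

/-- The squared `H^s` norm, expressed through the Fourier transform. -/
def sobolevNormSq (s : ℝ) (fhat : EuclideanSpace ℝ (Fin 2) → ℂ) : ℝ :=
  ∫ ξ : EuclideanSpace ℝ (Fin 2), (1 + ‖ξ‖ ^ 2) ^ s * ‖fhat ξ‖ ^ 2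

/-- Membership of a sequence in `ℓ^{r,∞}(ℕ)`:
`sup_{b>0} b^r · #{n : t_n > b} < ∞`. -/
def weakLr (r : ℝ) (t : ℕ → ℝ) : Prop :=
  ∃ A : ℝ, ∀ b : ℝ, 0 < b → b ^ r * (Nat.card {n : ℕ | b < t n} : ℝ) ≤ A

/-! ### Rectangles in the plane -/

/-- The closed rectangle `[a₀, b₀] × [a₁, b₁]` in the Euclidean plane. -/
def rect (a₀ b₀ a₁ b₁ : ℝ) : Set (EuclideanSpace ℝ (Fin 2)) :=
  {x | (a₀ ≤ x 0 ∧ x 0 ≤ b₀) ∧ (a₁ ≤ x 1 ∧ x 1 ≤ b₁)}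

lemma rect_eq_preimage (a₀ b₀ a₁ b₁ : ℝ) :
    rect a₀ b₀ a₁ b₁ = (MeasurableEquiv.toLp 2 (Fin 2 → ℝ)).symm ⁻¹'
      (Set.Icc ![a₀, a₁] ![b₀, b₁]) := by
  ext x
  simp only [rect, Set.mem_ofPred_eq, Set.mem_preimage, Set.mem_Icc, Pi.le_def, Fin.forall_fin_two]
  simp
  tauto

lemma measurableSet_rect (a₀ b₀ a₁ b₁ : ℝ) : MeasurableSet (rect a₀ b₀ a₁ b₁) := by
  rw [rect_eq_preimage]
  exact (MeasurableEquiv.measurable _) measurableSet_Icc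

lemma volume_rect (a₀ b₀ a₁ b₁ : ℝ) :
    volume (rect a₀ b₀ a₁ b₁) = ENNReal.ofReal (b₀ - a₀) * ENNReal.ofReal (b₁ - a₁) := by
  rw [rect_eq_preimage,
    (EuclideanSpace.volume_preserving_symm_measurableEquiv_toLp (Fin 2)).measure_preimage
      measurableSet_Icc.nullMeasurableSet, Real.volume_Icc_pi]
  simp

lemma volume_rect_ne_top (a₀ b₀ a₁ b₁ : ℝ) : volume (rect a₀ b₀ a₁ b₁) ≠ ⊤ := by
  rw [volume_rect]
  exact ENNReal.mul_ne_top ENNReal.ofReal_ne_top ENNReal.ofReal_ne_top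

lemma measureReal_rect {a₀ b₀ a₁ b₁ : ℝ} (h₀ : a₀ ≤ b₀) (h₁ : a₁ ≤ b₁) :
    volume.real (rect a₀ b₀ a₁ b₁) = (b₀ - a₀) * (b₁ - a₁) := by
  rw [Measure.real, volume_rect, ENNReal.toReal_mul, ENNReal.toReal_ofReal (by linarith),
    ENNReal.toReal_ofReal (by linarith)]

/-! ### The test datum -/

/-- The frequency side of the test datum: the indicator function of `[0, N] × [N, N + 1]`. -/
def testDatum (N : ℝ) : EuclideanSpace ℝ (Fin 2) → ℂ :=
  (rect 0 N N (N + 1)).indicator fun _ => 1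

lemma hypEvol_testDatum (N t : ℝ) (x : EuclideanSpace ℝ (Fin 2)) :
    hypEvol (testDatum N) t x = ∫ ξ in rect 0 N N (N + 1),
      Complex.exp (Complex.I * ((x 0 * ξ 0 + x 1 * ξ 1 + t * (ξ 0 * ξ 1) : ℝ) : ℂ)) := by
  rw [hypEvol, ← integral_indicator (measurableSet_rect _ _ _ _)]
  congr 1
  ext ξ
  by_cases h : ξ ∈ rect 0 N N (N + 1) <;> simp [testDatum, h]

lemma norm_exp_I_mul (θ : ℝ) : ‖Complex.exp (Complex.I * (θ : ℂ))‖ = 1 := by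
  rw [mul_comm]; exact Complex.norm_exp_ofReal_mul_I θ

lemma norm_hypEvol_testDatum_le {N : ℝ} (hN : 0 ≤ N) (t : ℝ) (x : EuclideanSpace ℝ (Fin 2)) :
    ‖hypEvol (testDatum N) t x‖ ≤ N := by
  rw [hypEvol_testDatum]
  refine (norm_setIntegral_le_of_norm_le_const (C := 1)
    (lt_top_iff_ne_top.2 (volume_rect_ne_top _ _ _ _)) fun ξ _ => (norm_exp_I_mul _).le).trans ?_
  rw [measureReal_rect hN (by linarith)]
  linarith

lemma measurable_hypEvol_testDatum (N t : ℝ) : Measurable (hypEvol (testDatum N) t) := by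
  have : hypEvol (testDatum N) t = fun x => ∫ ξ in rect 0 N N (N + 1),
      Complex.exp (Complex.I * ((x 0 * ξ 0 + x 1 * ξ 1 + t * (ξ 0 * ξ 1) : ℝ) : ℂ)) :=
    funext fun x => hypEvol_testDatum N t x
  rw [this]
  apply StronglyMeasurable.measurable
  apply StronglyMeasurable.integral_prod_right
    (f := fun x ξ : EuclideanSpace ℝ (Fin 2) =>
      Complex.exp (Complex.I * ((x 0 * ξ 0 + x 1 * ξ 1 + t * (ξ 0 * ξ 1) : ℝ) : ℂ)))
  apply Continuous.stronglyMeasurable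
  simp only [Function.uncurry_def]
  fun_prop

/-- No cancellation: after removing the constant phase `x₁ N`, the oscillation of the phase on the
frequency rectangle is at most `3/4` when `x₁` is small, `x₀` is within `1/(4N)` of `-tN`, and
`tN ≤ 1/4`, so the real part of the integrand stays above `1/2`. -/
lemma le_norm_hypEvol_testDatum {N t : ℝ} (hN : 0 < N) (ht : 0 ≤ t) (htN : t * N ≤ 1 / 4)
    {x : EuclideanSpace ℝ (Fin 2)} (hx₁ : |x 1| ≤ 1 / 4) (hx₀ : |x 0 + t * N| * N ≤ 1 / 4) :
    N / 2 ≤ ‖hypEvol (testDatum N) t x‖ := by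
  have hvol := measureReal_rect hN.le (show N ≤ N + 1 by linarith)
  have hrot : Complex.exp (Complex.I * ((-(x 1 * N) : ℝ) : ℂ)) * hypEvol (testDatum N) t x =
      ∫ ξ in rect 0 N N (N + 1), Complex.exp (Complex.I *
        ((x 1 * (ξ 1 - N) + (x 0 + t * N) * ξ 0 + t * ξ 0 * (ξ 1 - N) : ℝ) : ℂ)) := by
    rw [hypEvol_testDatum, ← integral_const_mul]
    congr 1
    ext ξ
    rw [← Complex.exp_add]
    congr 1
    push_cast
    ring
  have hnorm : ‖hypEvol (testDatum N) t x‖ = ‖Complex.exp (Complex.I * ((-(x 1 * N) : ℝ) : ℂ)) *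
      hypEvol (testDatum N) t x‖ := by
    rw [norm_mul, norm_exp_I_mul, one_mul]
  have hint : IntegrableOn (fun ξ : EuclideanSpace ℝ (Fin 2) => Complex.exp (Complex.I *
      ((x 1 * (ξ 1 - N) + (x 0 + t * N) * ξ 0 + t * ξ 0 * (ξ 1 - N) : ℝ) : ℂ)))
      (rect 0 N N (N + 1)) := by
    refine Measure.integrableOn_of_bounded (M := 1) (volume_rect_ne_top _ _ _ _) ?_ ?_
    · apply Continuous.aestronglyMeasurable
      fun_prop
    · exact Eventually.of_forall fun ξ => (norm_exp_I_mul _).le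
  rw [hnorm, hrot]
  refine le_trans ?_ (Complex.re_le_norm _)
  have hre := integral_re (𝕜 := ℂ) hint
  simp only [RCLike.re_to_complex] at hre
  rw [← hre]
  have hconst : ∫ _ξ in rect 0 N N (N + 1), (1 / 2 : ℝ) = N / 2 := by
    rw [setIntegral_const, hvol, smul_eq_mul]; ring
  rw [← hconst]
  refine setIntegral_mono_on (integrableOn_const (volume_rect_ne_top _ _ _ _)) hint.re
    (measurableSet_rect _ _ _ _) ?_
  rintro ξ ⟨⟨h1, h2⟩, h3, h4⟩
  rw [mul_comm, Complex.exp_ofReal_mul_I_re]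
  set θ := x 1 * (ξ 1 - N) + (x 0 + t * N) * ξ 0 + t * ξ 0 * (ξ 1 - N) with hθ
  have hA : |x 1 * (ξ 1 - N)| ≤ 1 / 4 := by
    rw [abs_mul, abs_of_nonneg (show 0 ≤ ξ 1 - N by linarith)]
    nlinarith [abs_nonneg (x 1)]
  have hB : |(x 0 + t * N) * ξ 0| ≤ 1 / 4 := by
    rw [abs_mul, abs_of_nonneg h1]
    exact (mul_le_mul_of_nonneg_left h2 (abs_nonneg _)).trans hx₀
  have hC : |t * ξ 0 * (ξ 1 - N)| ≤ 1 / 4 := by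
    have h5 : 0 ≤ t * ξ 0 := mul_nonneg ht h1
    rw [abs_of_nonneg (mul_nonneg h5 (by linarith))]
    have h6 : t * ξ 0 ≤ t * N := mul_le_mul_of_nonneg_left h2 ht
    nlinarith
  have hθ' : |θ| ≤ 3 / 4 := by
    have := abs_add_three (x 1 * (ξ 1 - N)) ((x 0 + t * N) * ξ 0) (t * ξ 0 * (ξ 1 - N))
    linarith
  have hsq : θ ^ 2 ≤ (3 / 4) ^ 2 := sq_le_sq' (by linarith [(abs_le.1 hθ').1]) (abs_le.1 hθ').2
  have := Real.one_sub_sq_div_two_le_cos (x := θ)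
  linarith

lemma norm_sq_eq_add (ξ : EuclideanSpace ℝ (Fin 2)) : ‖ξ‖ ^ 2 = ξ 0 ^ 2 + ξ 1 ^ 2 := by
  simp [EuclideanSpace.norm_sq_eq]

lemma sobolev_integrand_testDatum (s N : ℝ) :
    (fun ξ : EuclideanSpace ℝ (Fin 2) => (1 + ‖ξ‖ ^ 2) ^ s * ‖testDatum N ξ‖ ^ 2) =
      (rect 0 N N (N + 1)).indicator fun ξ => (1 + ‖ξ‖ ^ 2) ^ s := by
  ext ξ
  by_cases h : ξ ∈ rect 0 N N (N + 1) <;> simp [testDatum, h]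

/-- The weight on the frequency rectangle; replacing `s` by `max s 0` treats negative `s`
simultaneously. -/
lemma sobolev_weight_le {N : ℝ} (hN : 1 ≤ N) (s : ℝ) {ξ : EuclideanSpace ℝ (Fin 2)}
    (hξ : ξ ∈ rect 0 N N (N + 1)) : (1 + ‖ξ‖ ^ 2) ^ s ≤ (6 * N ^ 2) ^ max s 0 := by
  obtain ⟨⟨h1, h2⟩, h3, h4⟩ := hξ
  have hle : 1 + ‖ξ‖ ^ 2 ≤ 6 * N ^ 2 := by
    rw [norm_sq_eq_add]
    nlinarith
  calc (1 + ‖ξ‖ ^ 2) ^ s ≤ (1 + ‖ξ‖ ^ 2) ^ max s 0 :=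
        Real.rpow_le_rpow_of_exponent_le (by nlinarith [sq_nonneg ‖ξ‖]) (le_max_left _ _)
    _ ≤ _ := Real.rpow_le_rpow (by positivity) hle (le_max_right _ _)

lemma integrableOn_sobolev_weight {N : ℝ} (hN : 1 ≤ N) (s : ℝ) :
    IntegrableOn (fun ξ : EuclideanSpace ℝ (Fin 2) => (1 + ‖ξ‖ ^ 2) ^ s)
      (rect 0 N N (N + 1)) := by
  refine Measure.integrableOn_of_bounded (M := (6 * N ^ 2) ^ max s 0)
    (volume_rect_ne_top _ _ _ _) ?_ ?_
  · exact Measurable.aestronglyMeasurable (by fun_prop)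
  · refine (ae_restrict_iff' (measurableSet_rect _ _ _ _)).2 (Eventually.of_forall fun ξ hξ => ?_)
    rw [Real.norm_of_nonneg (by positivity)]
    exact sobolev_weight_le hN s hξ

lemma integrable_sobolev_testDatum {N : ℝ} (hN : 1 ≤ N) (s : ℝ) :
    Integrable (fun ξ : EuclideanSpace ℝ (Fin 2) =>
      (1 + ‖ξ‖ ^ 2) ^ s * ‖testDatum N ξ‖ ^ 2) := by
  rw [sobolev_integrand_testDatum, integrable_indicator_iff (measurableSet_rect _ _ _ _)]
  exact integrableOn_sobolev_weight hN s

lemma sobolevNormSq_testDatum_le {N : ℝ} (hN : 1 ≤ N) (s : ℝ) :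
    sobolevNormSq s (testDatum N) ≤ (6 * N ^ 2) ^ max s 0 * N := by
  rw [sobolevNormSq, sobolev_integrand_testDatum, integral_indicator (measurableSet_rect _ _ _ _)]
  calc ∫ ξ in rect 0 N N (N + 1), (1 + ‖ξ‖ ^ 2) ^ s
      ≤ ∫ _ξ in rect 0 N N (N + 1), (6 * N ^ 2) ^ max s 0 :=
        setIntegral_mono_on (integrableOn_sobolev_weight hN s)
          (integrableOn_const (volume_rect_ne_top _ _ _ _)) (measurableSet_rect _ _ _ _)
          fun ξ hξ => sobolev_weight_le hN s hξ
    _ = _ := by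
        rw [setIntegral_const, measureReal_rect (by linarith) (by linarith), smul_eq_mul]
        ring

/-! ### The sequence of times -/

/-- The sequence `(n + 1)^{-1/r}`. -/
def powSeq (r : ℝ) (n : ℕ) : ℝ := ((n : ℝ) + 1) ^ (-(1 / r))

lemma powSeq_pos (r : ℝ) (n : ℕ) : 0 < powSeq r n := by unfold powSeq; positivity

lemma antitone_powSeq {r : ℝ} (hr : 0 < r) : Antitone (powSeq r) := by
  intro m n hmn
  have : (m : ℝ) ≤ n := by exact_mod_cast hmn
  exact Real.rpow_le_rpow_of_nonpos (by positivity) (by linarith)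
    (by have : 0 < 1 / r := by positivity
        linarith)

lemma tendsto_powSeq {r : ℝ} (hr : 0 < r) : Tendsto (powSeq r) atTop (nhds 0) :=
  (tendsto_rpow_neg_atTop (show 0 < 1 / r by positivity)).comp
    (tendsto_atTop_add_const_right _ 1 tendsto_natCast_atTop_atTop)

lemma weakLr_powSeq {r : ℝ} (hr : 0 < r) : weakLr r (powSeq r) := by
  refine ⟨1, fun b hb => ?_⟩
  have hsub : {n : ℕ | b < powSeq r n} ⊆ (Finset.range ⌊b ^ (-r)⌋₊ : Set ℕ) := by
    intro n hn
    have h1 : powSeq r n ^ (-r) < b ^ (-r) := Real.rpow_lt_rpow_of_neg hb hn (by linarith)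
    have h2 : powSeq r n ^ (-r) = (n : ℝ) + 1 := by
      rw [powSeq, ← Real.rpow_mul (by positivity)]
      rw [show -(1 / r) * -r = 1 by field_simp, Real.rpow_one]
    rw [h2] at h1
    simp only [Finset.coe_range, Set.mem_Iio]
    exact Nat.lt_of_succ_le (Nat.le_floor (by push_cast; linarith))
  have hcard : Nat.card {n : ℕ | b < powSeq r n} ≤ ⌊b ^ (-r)⌋₊ := by
    have := Nat.card_mono (Finset.finite_toSet _) hsub
    simpa using this
  have hb' : (0 : ℝ) < b ^ (-r) := by positivity
  calc b ^ r * (Nat.card {n : ℕ | b < powSeq r n} : ℝ) ≤ b ^ r * b ^ (-r) := by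
        gcongr
        exact (Nat.cast_le.2 hcard).trans (Nat.floor_le hb'.le)
    _ = 1 := by rw [← Real.rpow_add hb]; simp

/-- The gap between consecutive terms of `(n + 1)^{-1/r}` is `O(t_n ^ (1 + r))`, by Bernoulli's
inequality. -/
lemma powSeq_gap {r : ℝ} (hr0 : 0 < r) (hr1 : r ≤ 1) (n : ℕ) :
    powSeq r n - powSeq r (n + 1) ≤ 1 / r * 2 ^ (1 / r) * powSeq r (n + 1) ^ (1 + r) := by
  set p := 1 / r with hp
  have hp1 : 1 ≤ p := by rw [hp, le_div_iff₀ hr0]; linarith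
  have hp0 : 0 < p := by linarith
  set m : ℝ := (n : ℝ) + 1 with hm
  have hm1 : 1 ≤ m := by rw [hm]; linarith [(Nat.cast_nonneg n : (0 : ℝ) ≤ n)]
  have hm0 : 0 < m := by linarith
  have e0 : powSeq r n = m ^ (-p) := rfl
  have e1 : powSeq r (n + 1) = (m + 1) ^ (-p) := by
    rw [powSeq]; push_cast; rfl
  have e2 : ((m + 1) ^ (-p)) ^ (1 + r) = (m + 1) ^ (-p) * (m + 1)⁻¹ := by
    rw [← Real.rpow_mul (by positivity), show -p * (1 + r) = -p + -1 by rw [hp]; field_simp; ring,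
      Real.rpow_add (by positivity), Real.rpow_neg_one]
  rw [e0, e1, e2]
  have hbern : 1 - p * (m + 1)⁻¹ ≤ (1 - (m + 1)⁻¹) ^ p := by
    have h := one_add_mul_self_le_rpow_one_add (s := -(m + 1)⁻¹)
      (by have : (m + 1)⁻¹ ≤ 1 := inv_le_one_of_one_le₀ (by linarith)
          linarith) hp1
    calc 1 - p * (m + 1)⁻¹ = 1 + p * (-(m + 1)⁻¹) := by ring
      _ ≤ _ := h
      _ = _ := by ring_nf
  have hratio : (m + 1) ^ (-p) = m ^ (-p) * (1 - (m + 1)⁻¹) ^ p := by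
    have : 1 - (m + 1)⁻¹ = m / (m + 1) := by field_simp; ring
    rw [this, Real.div_rpow hm0.le (by positivity), Real.rpow_neg hm0.le,
      Real.rpow_neg (by positivity)]
    have : m ^ p ≠ 0 := by positivity
    field_simp
  have hdouble : m ^ (-p) ≤ 2 ^ p * (m + 1) ^ (-p) := by
    rw [Real.rpow_neg hm0.le, Real.rpow_neg (by positivity), ← div_eq_mul_inv,
      ← Real.div_rpow (by norm_num) (by positivity), ← Real.inv_rpow hm0.le]
    refine Real.rpow_le_rpow (by positivity) ?_ hp0.le
    rw [inv_eq_one_div, div_le_div_iff₀ hm0 (by positivity)]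
    linarith
  calc m ^ (-p) - (m + 1) ^ (-p) = m ^ (-p) * (1 - (1 - (m + 1)⁻¹) ^ p) := by
        rw [hratio]; ring
    _ ≤ m ^ (-p) * (p * (m + 1)⁻¹) := by
        gcongr
        linarith
    _ ≤ (2 ^ p * (m + 1) ^ (-p)) * (p * (m + 1)⁻¹) := by
        gcongr
    _ = _ := by ring

/-- Every small `τ` is approximated from below by a term of the sequence, to within
`O(τ ^ (1 + r))`. -/
lemma exists_powSeq_near {r : ℝ} (hr0 : 0 < r) (hr1 : r ≤ 1) {τ : ℝ} (hτ0 : 0 < τ) (hτ1 : τ < 1) :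
    ∃ n, powSeq r n ≤ τ ∧ τ - powSeq r n ≤ 1 / r * 2 ^ (1 / r) * τ ^ (1 + r) := by
  classical
  have hex : ∃ n, powSeq r n ≤ τ :=
    (((tendsto_powSeq hr0).eventually_lt_const hτ0).exists).imp fun _ h => h.le
  have hspec := Nat.find_spec hex
  obtain ⟨k, hk⟩ : ∃ k, Nat.find hex = k + 1 := by
    refine Nat.exists_eq_succ_of_ne_zero fun h0 => ?_
    rw [h0] at hspec
    simp [powSeq] at hspec
    linarith
  have hprev : τ < powSeq r k := not_le.1 (Nat.find_min hex (by omega))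
  rw [hk] at hspec
  refine ⟨k + 1, hspec, ?_⟩
  calc τ - powSeq r (k + 1) ≤ powSeq r k - powSeq r (k + 1) := by linarith
    _ ≤ _ := powSeq_gap hr0 hr1 k
    _ ≤ _ := by
      gcongr
      exact (powSeq_pos r _).le

/-! ### The maximal function -/

lemma le_iSup_testDatum {N : ℝ} (hN : 0 ≤ N) (t : ℕ → ℝ) (x : EuclideanSpace ℝ (Fin 2)) (n : ℕ) :
    ‖hypEvol (testDatum N) (t n) x‖ ≤ ⨆ n : ℕ, ‖hypEvol (testDatum N) (t n) x‖ :=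
  le_ciSup (f := fun n => ‖hypEvol (testDatum N) (t n) x‖)
    ⟨N, by rintro _ ⟨n, rfl⟩; exact norm_hypEvol_testDatum_le hN _ _⟩ n

lemma integrableOn_maximal_testDatum {N : ℝ} (hN : 0 ≤ N) (t : ℕ → ℝ) :
    IntegrableOn (fun x => (⨆ n : ℕ, ‖hypEvol (testDatum N) (t n) x‖) ^ 2)
      (Metric.ball (0 : EuclideanSpace ℝ (Fin 2)) 1) := by
  refine Measure.integrableOn_of_bounded (M := N ^ 2) measure_ball_lt_top.ne ?_ ?_
  · apply Measurable.aestronglyMeasurable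
    apply Measurable.pow_const
    exact Measurable.iSup fun n => (measurable_hypEvol_testDatum N (t n)).norm
  · refine Eventually.of_forall fun x => ?_
    have h0 : 0 ≤ ⨆ n : ℕ, ‖hypEvol (testDatum N) (t n) x‖ :=
      Real.iSup_nonneg fun n => norm_nonneg _
    rw [Real.norm_of_nonneg (by positivity)]
    gcongr
    exact ciSup_le fun n => norm_hypEvol_testDatum_le hN _ _

/-- If every `y ∈ (0, L]` lies above some `t_n N` at distance at most `1/(4N)`, then the maximal
function is at least `N/2` on `[-L, -L/2] × [-1/4, 1/4]`. Stopping at `-L/2` keeps `x₀` away from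
`0`, where no term of the sequence need be available. -/
lemma maximal_testDatum_ge {N L : ℝ} (hN : 0 < N) (hL : 0 < L) (hL4 : L ≤ 1 / 4) (t : ℕ → ℝ)
    (ht : ∀ n, 0 ≤ t n)
    (hnear : ∀ y, 0 < y → y ≤ L → ∃ n, t n * N ≤ y ∧ (y - t n * N) * N ≤ 1 / 4) :
    N ^ 2 * L / 16 ≤ ∫ x in Metric.ball (0 : EuclideanSpace ℝ (Fin 2)) 1,
      (⨆ n : ℕ, ‖hypEvol (testDatum N) (t n) x‖) ^ 2 := by
  have hsub : rect (-L) (-(L / 2)) (-(1 / 4)) (1 / 4) ⊆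
      Metric.ball (0 : EuclideanSpace ℝ (Fin 2)) 1 := by
    rintro x ⟨⟨h1, h2⟩, h3, h4⟩
    rw [mem_ball_zero_iff]
    have := norm_sq_eq_add x
    nlinarith [norm_nonneg x]
  have hint := integrableOn_maximal_testDatum hN.le t
  calc N ^ 2 * L / 16
      = ∫ _x in rect (-L) (-(L / 2)) (-(1 / 4)) (1 / 4), (N / 2) ^ 2 := by
        rw [setIntegral_const, measureReal_rect (by linarith) (by norm_num), smul_eq_mul]
        ring
    _ ≤ ∫ x in rect (-L) (-(L / 2)) (-(1 / 4)) (1 / 4),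
          (⨆ n : ℕ, ‖hypEvol (testDatum N) (t n) x‖) ^ 2 := by
        refine setIntegral_mono_on (integrableOn_const (volume_rect_ne_top _ _ _ _))
          (hint.mono_set hsub) (measurableSet_rect _ _ _ _) ?_
        rintro x ⟨⟨h1, h2⟩, h3, h4⟩
        obtain ⟨n, hn1, hn2⟩ := hnear (-x 0) (by linarith) (by linarith)
        have hlow := le_norm_hypEvol_testDatum (x := x) hN (ht n) (by linarith)
          (abs_le.2 ⟨h3, h4⟩) (by
            rw [abs_of_nonpos (by linarith)]
            convert hn2 using 2
            ring)
        gcongr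
        exact hlow.trans (le_iSup_testDatum hN.le t x n)
    _ ≤ _ := setIntegral_mono_set hint (Eventually.of_forall fun x => by positivity)
        hsub.eventuallyLE

theorem sharpness_maximal_estimate_nonelliptic
    (r : ℝ) (hr0 : 0 < r) (hr1 : r ≤ 1) :
    ∃ t : ℕ → ℝ, (∀ n, 0 < t n) ∧ Antitone t ∧
      Tendsto t atTop (nhds 0) ∧ weakLr r t ∧
      ∀ s : ℝ, s < r / (r + 1) →
        ¬ ∃ C : ℝ, ∀ fhat : EuclideanSpace ℝ (Fin 2) → ℂ,
          Integrable (fun ξ : EuclideanSpace ℝ (Fin 2) => (1 + ‖ξ‖ ^ 2) ^ s * ‖fhat ξ‖ ^ 2) →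
          Real.sqrt (∫ x in Metric.ball (0 : EuclideanSpace ℝ (Fin 2)) 1,
              (⨆ n : ℕ, ‖hypEvol fhat (t n) x‖) ^ 2) ≤
            C * Real.sqrt (sobolevNormSq s fhat) := by
  refine ⟨powSeq r, powSeq_pos r, antitone_powSeq hr0, tendsto_powSeq hr0, weakLr_powSeq hr0, ?_⟩
  rintro s hs ⟨C, hC⟩
  set σ := max s 0 with hσ
  have hσr : σ < r / (r + 1) := max_lt hs (by positivity)
  set K : ℝ := 1 / r * 2 ^ (1 / r) with hK
  have hK1 : 1 ≤ K := by
    have h1 : 1 ≤ 1 / r := by rw [le_div_iff₀ hr0]; linarith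
    have h2 : (1 : ℝ) ≤ 2 ^ (1 / r) := Real.one_le_rpow (by norm_num) (by linarith)
    nlinarith
  -- `c = 1/(4K)` makes both `K c ^ (1 + r) ≤ 1/4` and `c ≤ 1/4` hold.
  set c : ℝ := 1 / (4 * K) with hc
  have hc0 : 0 < c := by positivity
  have hc4 : c ≤ 1 / 4 := by
    rw [hc]; exact one_div_le_one_div_of_le (by norm_num) (by linarith)
  have hKc : K * c ^ (1 + r) ≤ 1 / 4 := by
    have : c ^ (1 + r) ≤ c ^ (1 : ℝ) :=
      Real.rpow_le_rpow_of_exponent_ge hc0 (by linarith) (by linarith)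
    rw [Real.rpow_one] at this
    calc K * c ^ (1 + r) ≤ K * c := by gcongr
      _ = 1 / 4 := by rw [hc]; field_simp
  have key : ∀ N : ℝ, 1 ≤ N →
      N ^ (2 * (r / (r + 1) - σ)) ≤ 16 / c * (C ^ 2 * 6 ^ σ) := by
    intro N hN
    have hN0 : 0 < N := by linarith
    -- Times up to `c N ^ (-2 / (1 + r))` have gaps `O(N ^ (-2))`.
    set τ₀ : ℝ := c * N ^ (-(2 / (1 + r))) with hτ₀
    have hτ₀pos : 0 < τ₀ := by positivity
    have hτN : τ₀ * N ≤ 1 / 4 := by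
      have h1 : N ^ (-(2 / (1 + r))) * N ≤ 1 := by
        rw [← Real.rpow_add_one hN0.ne']
        apply Real.rpow_le_one_of_one_le_of_nonpos hN
        have : 1 ≤ 2 / (1 + r) := by rw [le_div_iff₀ (by linarith)]; linarith
        linarith
      calc τ₀ * N = c * (N ^ (-(2 / (1 + r))) * N) := by rw [hτ₀]; ring
        _ ≤ c * 1 := by gcongr
        _ ≤ 1 / 4 := by linarith
    have hτ₀1 : τ₀ < 1 := by nlinarith
    have hgap : K * τ₀ ^ (1 + r) * N * N ≤ 1 / 4 := by
      have h1 : τ₀ ^ (1 + r) = c ^ (1 + r) * (N ^ 2)⁻¹ := by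
        rw [hτ₀, Real.mul_rpow hc0.le (by positivity), ← Real.rpow_mul hN0.le,
          show -(2 / (1 + r)) * (1 + r) = -((2 : ℕ) : ℝ) by push_cast; field_simp,
          Real.rpow_neg hN0.le, Real.rpow_natCast]
      rw [h1]
      calc K * (c ^ (1 + r) * (N ^ 2)⁻¹) * N * N = K * c ^ (1 + r) := by field_simp
        _ ≤ 1 / 4 := hKc
    have hlow := maximal_testDatum_ge (L := τ₀ * N) hN0 (by positivity) hτN (powSeq r)
      (fun n => (powSeq_pos r n).le) (by
        intro y hy0 hyL
        have hyτ : y / N ≤ τ₀ := by rw [div_le_iff₀ hN0]; exact hyL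
        obtain ⟨n, h1, h2⟩ := exists_powSeq_near hr0 hr1 (τ := y / N) (by positivity)
          (by linarith)
        refine ⟨n, by rwa [le_div_iff₀ hN0] at h1, ?_⟩
        calc (y - powSeq r n * N) * N = (y / N - powSeq r n) * N * N := by field_simp
          _ ≤ K * (y / N) ^ (1 + r) * N * N := by gcongr
          _ ≤ K * τ₀ ^ (1 + r) * N * N := by gcongr
          _ ≤ 1 / 4 := hgap)
    have hbound := hC (testDatum N) (integrable_sobolev_testDatum hN s)
    set A := ∫ x in Metric.ball (0 : EuclideanSpace ℝ (Fin 2)) 1,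
      (⨆ n : ℕ, ‖hypEvol (testDatum N) (powSeq r n) x‖) ^ 2
    have hA0 : 0 ≤ A := le_trans (by positivity) hlow
    have hB0 : 0 ≤ sobolevNormSq s (testDatum N) := by
      unfold sobolevNormSq
      exact integral_nonneg fun ξ => by positivity
    have hA : A ≤ C ^ 2 * sobolevNormSq s (testDatum N) := by
      have := pow_le_pow_left₀ (Real.sqrt_nonneg A) hbound 2
      rwa [mul_pow, Real.sq_sqrt hA0, Real.sq_sqrt hB0] at this
    have hfin : N ^ 2 * (τ₀ * N) / 16 ≤ C ^ 2 * ((6 * N ^ 2) ^ σ * N) :=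
      hlow.trans (hA.trans (mul_le_mul_of_nonneg_left (sobolevNormSq_testDatum_le hN s)
        (sq_nonneg C)))
    have e1 : (6 * N ^ 2 : ℝ) ^ σ = 6 ^ σ * N ^ (2 * σ) := by
      rw [Real.mul_rpow (by norm_num) (by positivity), ← Real.rpow_natCast N 2,
        ← Real.rpow_mul hN0.le]
      norm_num
    have e2 : N ^ 2 * N ^ (-(2 / (1 + r))) =
        N ^ (2 * (r / (r + 1) - σ)) * N ^ (2 * σ) := by
      rw [← Real.rpow_natCast N 2, ← Real.rpow_add hN0, ← Real.rpow_add hN0]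
      congr 1
      push_cast
      have : r + 1 ≠ 0 := by positivity
      have : 1 + r ≠ 0 := by positivity
      field_simp
      ring
    have e3 : N ^ 2 * (τ₀ * N) / 16 =
        c / 16 * N ^ (2 * (r / (r + 1) - σ)) * (N ^ (2 * σ) * N) := by
      calc N ^ 2 * (τ₀ * N) / 16 = c / 16 * (N ^ 2 * N ^ (-(2 / (1 + r)))) * N := by
            rw [hτ₀]; ring
        _ = _ := by rw [e2]; ring
    rw [e3, e1, show C ^ 2 * (6 ^ σ * N ^ (2 * σ) * N) = C ^ 2 * 6 ^ σ * (N ^ (2 * σ) * N) by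
      ring] at hfin
    have h5 := le_of_mul_le_mul_right hfin (by positivity)
    calc N ^ (2 * (r / (r + 1) - σ)) = 16 / c * (c / 16 * N ^ (2 * (r / (r + 1) - σ))) := by
          field_simp
      _ ≤ _ := by gcongr
  have htop := tendsto_rpow_atTop (show 0 < 2 * (r / (r + 1) - σ) by linarith)
  obtain ⟨N, hN1, hN2⟩ := ((htop.eventually_gt_atTop (16 / c * (C ^ 2 * 6 ^ σ))).and
    (eventually_ge_atTop 1)).exists
  exact absurd (key N hN2) (not_le.2 hN1)
end
end

section
/- Let N ≥ 1 and let j, k ∈ ℝ with k ≥ 1 and k < j < 2k. Let φ be a Schwartz function on ℝ^N whose Fourier transform φ̂ is supported in a sufficiently small neighborhood of the origin, and for c(θ) ∈ ℝ^N with |c(θ)| ≤ 2^{k+1} and c(ν) ∈ ℝ^N define φ_{θ,ν} by φ̂_{θ,ν}(ξ) = 2^{-(j-k)N/2} e^{-i c(ν)·ξ} φ̂((ξ − c(θ))/2^{j-k}). Then for every M > 0 there exists a constant C_M, depending only on M, N and φ, such that for all t ∈ (0, 2^{-j}) and all x ∈ ℝ^N, |e^{itΔ}φ_{θ,ν}(x)|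 ≤ C_M · 2^{(j-k)N/2} · (1 + 2^{j-k} |x − c(ν) + 2t c(θ)|)^{-M}. -/
/-! Writing `λ = 2^{j-k}`, the substitution `ξ = c(θ) + λη` turns the evolution of the wave packet
into a unimodular factor times `λ^{N/2} I(ψ, s, z)`, where
`I(ψ, s, z) = ∫ e^{i(z·η + s|η|²)} ψ(η) dη`, `ψ = φ̂`, `s = tλ²` and `z = λ(x - c(ν) + 2t c(θ))`
(`norm_schrodingerEvol_wavePacketHat`). Since `t < 2^{-j}` and `j < 2k`, the parameter `s` lies in
`(0, 1)`, so it suffices to bound `I(ψ, s, z)` by `C (1 + |z|)^{-n}` uniformly in `s ∈ [0, 1]`, for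
every Schwartz function `ψ` (`exists_one_add_norm_pow_mul_le`).

Integrating by parts in the direction of a vector `v` gives
`(z·v) I(ψ, s, z) = i I(∂_v ψ, s, z) - 2s I((v·η) ψ, s, z)` (`inner_mul_schrodingerEvol`). Both terms
on the right are integrals of the same type with another Schwartz amplitude, so the decay follows by
induction on `n`, simultaneously for all `ψ`. -/


open MeasureTheory Real Filter

noncomputable section

/-- The Schrödinger evolution `e^{itΔ}g`, expressed through the Fourier transform
`ghat` of the initial datum:  `e^{itΔ}g(x) = ∫ e^{i(x·ξ + t|ξ|²)} ĝ(ξ) dξ`. -/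
def schrodingerEvol {N : ℕ} (ghat : EuclideanSpace ℝ (Fin N) → ℂ) (t : ℝ)
    (x : EuclideanSpace ℝ (Fin N)) : ℂ :=
  ∫ ξ : EuclideanSpace ℝ (Fin N),
    Complex.exp (Complex.I * (((∑ i, x i * ξ i) + t * ‖ξ‖ ^ 2 : ℝ) : ℂ)) * ghat ξ

/-- The Fourier transform with the convention `ĝ(ξ) = ∫ e^{-i x·ξ} g(x) dx`. -/
def ftP {N : ℕ} (g : EuclideanSpace ℝ (Fin N) → ℂ) (ξ : EuclideanSpace ℝ (Fin N)) : ℂ :=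
  ∫ x : EuclideanSpace ℝ (Fin N),
    Complex.exp (-Complex.I * (((∑ i, x i * ξ i) : ℝ) : ℂ)) * g x

/-- The Fourier transform of the wave packet `φ_{θ,ν}`:
`φ̂_{θ,ν}(ξ) = 2^{-(j-k)N/2} e^{-i c(ν)·ξ} φ̂((ξ - c(θ))/2^{j-k})`. -/
def wavePacketHat {N : ℕ} (j k : ℝ) (φ : EuclideanSpace ℝ (Fin N) → ℂ)
    (cθ cν : EuclideanSpace ℝ (Fin N)) (ξ : EuclideanSpace ℝ (Fin N)) : ℂ :=
  ((2 : ℝ) ^ (-(j - k) * (N : ℝ) / 2) : ℝ) *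
    Complex.exp (-Complex.I * (((∑ i, cν i * ξ i) : ℝ) : ℂ)) *
    ftP φ (((2 : ℝ) ^ (j - k))⁻¹ • (ξ - cθ))


open scoped SchwartzMap LineDeriv FourierTransform

lemma sum_mul_eq_inner {N : ℕ} (x y : EuclideanSpace ℝ (Fin N)) :
    ∑ i, x i * y i = inner ℝ x y := by
  simp [PiLp.inner_apply, mul_comm]

lemma norm_exp_I_mul_ofReal (a : ℝ) : ‖Complex.exp (Complex.I * (a : ℂ))‖ = 1 := by
  rw [mul_comm]; exact Complex.norm_exp_ofReal_mul_I a

/-- The quadratic phase `e^{i(z·ξ + s|ξ|²)}`, the kernel of `schrodingerEvol`. -/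
def chirp {N : ℕ} (s : ℝ) (z ξ : EuclideanSpace ℝ (Fin N)) : ℂ :=
  Complex.exp (Complex.I * ((inner ℝ z ξ + s * ‖ξ‖ ^ 2 : ℝ) : ℂ))

section

variable {N : ℕ}

local notation "V" => EuclideanSpace ℝ (Fin N)

lemma schrodingerEvol_eq (g : V → ℂ) (s : ℝ) (z : V) :
    schrodingerEvol g s z = ∫ ξ, chirp s z ξ * g ξ := by
  simp only [schrodingerEvol, chirp, sum_mul_eq_inner]

lemma norm_chirp (s : ℝ) (z ξ : V) : ‖chirp s z ξ‖ = 1 := norm_exp_I_mul_ofReal _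

lemma continuous_chirp (s : ℝ) (z : V) : Continuous (chirp s z) := by
  unfold chirp; fun_prop

lemma hasFDerivAt_chirp (s : ℝ) (z ξ : V) :
    HasFDerivAt (chirp s z)
      ((Complex.I * chirp s z ξ) •
        Complex.ofRealCLM.comp (innerSL ℝ z + s • ((2 : ℝ) • innerSL ℝ ξ))) ξ := by
  have h1 : HasFDerivAt (fun ξ : V => inner ℝ z ξ + s * ‖ξ‖ ^ 2)
      (innerSL ℝ z + s • ((2 : ℝ) • innerSL ℝ ξ)) ξ := by
    refine ((innerSL ℝ z).hasFDerivAt).add ?_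
    have := (hasStrictFDerivAt_norm_sq ξ).hasFDerivAt.const_mul s
    convert! this using 2
    ext; simp
  have h2 := (((Complex.ofRealCLM.hasFDerivAt).comp ξ h1).const_mul Complex.I).cexp
  convert! h2 using 1
  ext v
  simp [chirp]
  ring

lemma integrable_chirp_mul (s : ℝ) (z : V) (ψ : 𝓢(V, ℂ)) :
    Integrable (fun ξ => chirp s z ξ * ψ ξ) :=
  ψ.integrable.bdd_mul (continuous_chirp s z).aestronglyMeasurable
    (.of_forall fun ξ => (norm_chirp s z ξ).le)

/-- Multiplication of a Schwartz function by the linear form `v·ξ`. -/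
def mulInner (v : V) (ψ : 𝓢(V, ℂ)) : 𝓢(V, ℂ) :=
  SchwartzMap.smulLeftCLM ℂ (fun ξ : V => inner ℝ v ξ) ψ

lemma mulInner_apply (v : V) (ψ : 𝓢(V, ℂ)) (ξ : V) :
    mulInner v ψ ξ = (inner ℝ v ξ : ℝ) * ψ ξ := by
  rw [mulInner, SchwartzMap.smulLeftCLM_apply_apply]
  · simp
  · exact (innerSL ℝ v).hasTemperateGrowth

/-- Integration by parts against the quadratic phase: multiplication by `z·v` is traded for other
Schwartz amplitudes. -/
lemma inner_mul_schrodingerEvol (s : ℝ) (z v : V) (ψ : 𝓢(V, ℂ)) :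
    ((inner ℝ z v : ℝ) : ℂ) * schrodingerEvol ψ s z =
      Complex.I * schrodingerEvol (∂_{v} ψ : 𝓢(V, ℂ)) s z
        - 2 * s * schrodingerEvol (mulInner v ψ) s z := by
  have hd : ∀ ξ, fderiv ℝ (chirp s z) ξ v * ψ ξ =
      (Complex.I * (inner ℝ z v : ℝ)) * (chirp s z ξ * ψ ξ)
        + (2 * s * Complex.I) * (chirp s z ξ * mulInner v ψ ξ) := by
    intro ξ
    rw [(hasFDerivAt_chirp s z ξ).fderiv, mulInner_apply, real_inner_comm ξ v]
    simp
    ring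
  have i1 := integrable_chirp_mul s z ψ
  have i2 := integrable_chirp_mul s z (mulInner v ψ)
  have i3 := integrable_chirp_mul s z (∂_{v} ψ : 𝓢(V, ℂ))
  have key := integral_mul_fderiv_eq_neg_fderiv_mul_of_integrable (μ := (volume : Measure V))
    (f := chirp s z) (g := ψ) (v := v)
    (by simp only [hd]; exact (i1.const_mul _).add (i2.const_mul _))
    (by simpa only [SchwartzMap.lineDerivOp_apply_eq_fderiv] using i3) i1
    (fun ξ _ => (hasFDerivAt_chirp s z ξ).differentiableAt) (fun ξ _ => ψ.differentiableAt)
  simp only [hd] at key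
  rw [integral_add (i1.const_mul _) (i2.const_mul _), integral_const_mul, integral_const_mul] at key
  simp only [schrodingerEvol_eq, SchwartzMap.lineDerivOp_apply_eq_fderiv]
  rw [key]
  linear_combination (((inner ℝ z v : ℝ) : ℂ) * (∫ ξ, chirp s z ξ * ψ ξ)
    + 2 * s * (∫ ξ, chirp s z ξ * mulInner v ψ ξ)) * Complex.I_sq

lemma norm_le_sum_abs (z : V) : ‖z‖ ≤ ∑ i, |z i| := by
  have h := (EuclideanSpace.basisFun (Fin N) ℝ).sum_repr z
  calc ‖z‖ = ‖∑ i, z i • EuclideanSpace.basisFun (Fin N) ℝ i‖ := by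
        conv_lhs => rw [← h]
        simp
    _ ≤ ∑ i, ‖z i • EuclideanSpace.basisFun (Fin N) ℝ i‖ := norm_sum_le _ _
    _ = ∑ i, |z i| := by simp [norm_smul]

/-- Rapid decay of the oscillatory integral, uniformly in the time parameter `s ∈ [0, 1]`. -/
lemma exists_one_add_norm_pow_mul_le (n : ℕ) : ∀ ψ : 𝓢(V, ℂ), ∃ C : ℝ, ∀ s ∈ Set.Icc (0 : ℝ) 1,
    ∀ z : V, (1 + ‖z‖) ^ n * ‖schrodingerEvol ψ s z‖ ≤ C := by
  induction n with
  | zero =>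
    refine fun ψ => ⟨∫ ξ, ‖ψ ξ‖, fun s _ z => ?_⟩
    rw [pow_zero, one_mul, schrodingerEvol_eq]
    refine (norm_integral_le_integral_norm _).trans (le_of_eq ?_)
    simp [norm_chirp]
  | succ n ih =>
    intro ψ
    choose C hC using ih
    let e : Fin N → V := fun i => EuclideanSpace.single i 1
    refine ⟨C ψ + ∑ i, (C (∂_{e i} ψ) + 2 * C (mulInner (e i) ψ)), fun s hs z => ?_⟩
    have hi : ∀ i, |z i| * ‖schrodingerEvol ψ s z‖ ≤
        ‖schrodingerEvol (∂_{e i} ψ : 𝓢(V, ℂ)) s z‖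
          + 2 * ‖schrodingerEvol (mulInner (e i) ψ) s z‖ := by
      intro i
      have h := inner_mul_schrodingerEvol s z (e i) ψ
      have hz : inner ℝ z (e i) = z i := by simp [e, EuclideanSpace.inner_single_right]
      rw [hz] at h
      calc |z i| * ‖schrodingerEvol ψ s z‖ = ‖((z i : ℝ) : ℂ) * schrodingerEvol ψ s z‖ := by simp
        _ ≤ _ := by
          rw [h]
          refine (norm_sub_le _ _).trans ?_
          simp only [norm_mul, Complex.norm_I, one_mul, Complex.norm_ofNat, Complex.norm_real,
            Real.norm_eq_abs, abs_of_nonneg hs.1]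
          gcongr
          nlinarith [hs.2]
    calc (1 + ‖z‖) ^ (n + 1) * ‖schrodingerEvol ψ s z‖
        = (1 + ‖z‖) ^ n * (‖schrodingerEvol ψ s z‖ + ‖z‖ * ‖schrodingerEvol ψ s z‖) := by ring
      _ ≤ (1 + ‖z‖) ^ n * (‖schrodingerEvol ψ s z‖ +
            ∑ i, (‖schrodingerEvol (∂_{e i} ψ : 𝓢(V, ℂ)) s z‖
              + 2 * ‖schrodingerEvol (mulInner (e i) ψ) s z‖)) := by
        gcongr
        refine (mul_le_mul_of_nonneg_right (norm_le_sum_abs z) (norm_nonneg _)).trans ?_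
        rw [Finset.sum_mul]
        exact Finset.sum_le_sum fun i _ => hi i
      _ ≤ _ := by
        rw [mul_add, Finset.mul_sum]
        refine add_le_add (hC ψ s hs z) (Finset.sum_le_sum fun i _ => ?_)
        have h1 := hC (∂_{e i} ψ) s hs z
        have h2 := hC (mulInner (e i) ψ) s hs z
        linarith

/-- The Fourier transform of a Schwartz function in the convention `ftP` is a Schwartz function: it
is Mathlib's transform composed with the dilation by `(2π)⁻¹`. -/
lemma exists_schwartzMap_eq_ftP (φ : 𝓢(V, ℂ)) : ∃ ψ : 𝓢(V, ℂ), ⇑ψ = ftP ⇑φ := by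
  have hπ : (2 * π)⁻¹ ≠ 0 := by positivity
  refine ⟨SchwartzMap.compCLMOfContinuousLinearEquiv ℂ
    (ContinuousLinearEquiv.smulLeft (Units.mk0 _ hπ) : V ≃L[ℝ] V) (𝓕 φ), ?_⟩
  ext ξ
  rw [SchwartzMap.compCLMOfContinuousLinearEquiv_apply, Function.comp_apply,
    SchwartzMap.fourier_coe, Real.fourier_eq', ftP]
  refine integral_congr_ae (.of_forall fun x => ?_)
  have h : (-2 * π * inner ℝ x ((2 * π)⁻¹ • ξ)) = - inner ℝ x ξ := by
    rw [inner_smul_right]; field_simp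
  simp only [sum_mul_eq_inner, smul_eq_mul]
  congr 2
  have h' : (ContinuousLinearEquiv.smulLeft (Units.mk0 _ hπ) : V ≃L[ℝ] V) ξ = (2 * π)⁻¹ • ξ := rfl
  rw [h', h]
  push_cast
  ring

/-- The parabolic change of variables `ξ = c(θ) + λη` with `λ = 2^{j-k}`. -/
lemma norm_schrodingerEvol_wavePacketHat (j k : ℝ) (φ : V → ℂ) (cθ cν : V) (t : ℝ) (x : V) :
    ‖schrodingerEvol (wavePacketHat j k φ cθ cν) t x‖ =
      (2 : ℝ) ^ ((j - k) * (N : ℝ) / 2) *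
        ‖schrodingerEvol (ftP φ) (t * ((2 : ℝ) ^ (j - k)) ^ 2)
          ((2 : ℝ) ^ (j - k) • (x - cν + (2 * t) • cθ))‖ := by
  set l : ℝ := (2 : ℝ) ^ (j - k) with hl
  have hl0 : 0 < l := by positivity
  set a : ℝ := (2 : ℝ) ^ (-(j - k) * (N : ℝ) / 2) with ha
  set u : ℂ := Complex.exp (Complex.I * ((inner ℝ (x - cν) cθ + t * ‖cθ‖ ^ 2 : ℝ) : ℂ)) with hu
  let G : V → ℂ := fun η =>
    (a * u) * (chirp (t * l ^ 2) (l • (x - cν + (2 * t) • cθ)) η * ftP φ η)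
  have hG : ∀ ξ, chirp t x ξ * wavePacketHat j k φ cθ cν ξ = G (l⁻¹ • (ξ - cθ)) := by
    intro ξ
    have hphase : inner ℝ x ξ + t * ‖ξ‖ ^ 2 - inner ℝ cν ξ =
        (inner ℝ (x - cν) cθ + t * ‖cθ‖ ^ 2) +
        (inner ℝ (l • (x - cν + (2 * t) • cθ)) (l⁻¹ • (ξ - cθ))
          + t * l ^ 2 * ‖l⁻¹ • (ξ - cθ)‖ ^ 2) := by
      rw [norm_smul, mul_pow, norm_sub_sq_real, real_inner_smul_left, real_inner_smul_right]
      simp only [inner_sub_left, inner_sub_right, inner_add_left, real_inner_smul_left,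
        real_inner_self_eq_norm_sq, norm_inv, Real.norm_eq_abs, inv_pow, sq_abs]
      rw [real_inner_comm ξ cθ]
      field_simp
      ring
    have hexp : chirp t x ξ * Complex.exp (-Complex.I * ((inner ℝ cν ξ : ℝ) : ℂ)) =
        u * chirp (t * l ^ 2) (l • (x - cν + (2 * t) • cθ)) (l⁻¹ • (ξ - cθ)) := by
      rw [hu, chirp, chirp, ← Complex.exp_add, ← Complex.exp_add, ← mul_add, ← Complex.ofReal_add,
        ← hphase]
      congr 1
      push_cast
      ring
    simp only [G, wavePacketHat, sum_mul_eq_inner, ← hl, ← ha]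
    linear_combination a * ftP φ (l⁻¹ • (ξ - cθ)) * hexp
  have hal : l ^ N * a = (2 : ℝ) ^ ((j - k) * (N : ℝ) / 2) := by
    rw [hl, ha, ← Real.rpow_mul_natCast (by norm_num), ← Real.rpow_add (by norm_num)]
    congr 1
    ring
  have hu1 : ‖u‖ = 1 := norm_exp_I_mul_ofReal _
  rw [schrodingerEvol_eq, schrodingerEvol_eq]
  simp only [hG]
  rw [integral_sub_right_eq_self (fun ξ => G (l⁻¹ • ξ)) cθ, Measure.integral_comp_inv_smul,
    integral_const_mul, norm_smul, norm_mul, norm_mul, hu1, ← hal, finrank_euclideanSpace_fin]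
  have ha0 : 0 < a := by positivity
  simp only [Real.norm_eq_abs, Complex.norm_real, abs_of_pos ha0, abs_pow, abs_of_pos hl0]
  ring

end

theorem wave_packet_decay
    (N : ℕ) (hN : 1 ≤ N) :
    ∃ r₀ : ℝ, 0 < r₀ ∧
      ∀ φ : SchwartzMap (EuclideanSpace ℝ (Fin N)) ℂ,
        Function.support (ftP ⇑φ) ⊆ Metric.ball (0 : EuclideanSpace ℝ (Fin N)) r₀ →
        ∀ M : ℝ, 0 < M →
          ∃ C : ℝ, 0 < C ∧
            ∀ j k : ℝ, 1 ≤ k → k < j → j < 2 * k →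
              ∀ cθ cν : EuclideanSpace ℝ (Fin N), ‖cθ‖ ≤ (2 : ℝ) ^ (k + 1) →
                ∀ t : ℝ, t ∈ Set.Ioo (0 : ℝ) ((2 : ℝ) ^ (-j)) →
                  ∀ x : EuclideanSpace ℝ (Fin N),
                    ‖schrodingerEvol (wavePacketHat j k (⇑φ) cθ cν) t x‖ ≤
                      C * (2 : ℝ) ^ ((j - k) * (N : ℝ) / 2) *
                        (1 + (2 : ℝ) ^ (j - k) * ‖x - cν + (2 * t) • cθ‖) ^ (-M) := by
  refine ⟨1, one_pos, fun φ _ M hM => ?_⟩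
  obtain ⟨ψ, hψ⟩ := exists_schwartzMap_eq_ftP φ
  obtain ⟨C, hC⟩ := exists_one_add_norm_pow_mul_le ⌈M⌉₊ ψ
  refine ⟨max C 1, by positivity, fun j k hk hkj hjk cθ cν _ t ht x => ?_⟩
  set l : ℝ := (2 : ℝ) ^ (j - k) with hl
  have hl0 : 0 < l := by positivity
  -- `tλ² < 2^{-j} 2^{2(j-k)} = 2^{j-2k} ≤ 1`
  have hs : t * l ^ 2 ∈ Set.Icc (0 : ℝ) 1 := by
    refine ⟨by have := ht.1; positivity, ?_⟩
    calc t * l ^ 2 ≤ (2 : ℝ) ^ (-j) * l ^ 2 := by gcongr; exact ht.2.le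
      _ = (2 : ℝ) ^ (j - 2 * k) := by
        rw [hl, ← Real.rpow_mul_natCast (by norm_num), ← Real.rpow_add (by norm_num)]
        congr 1
        push_cast
        ring
      _ ≤ 1 := Real.rpow_le_one_of_one_le_of_nonpos (by norm_num) (by linarith)
  have h := hC _ hs (l • (x - cν + (2 * t) • cθ))
  rw [norm_smul, Real.norm_eq_abs, abs_of_pos hl0, hψ] at h
  rw [norm_schrodingerEvol_wavePacketHat, ← hl, mul_comm (max C 1), mul_assoc]
  gcongr
  set R : ℝ := 1 + l * ‖x - cν + (2 * t) • cθ‖ with hR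
  have hR1 : 1 ≤ R := by rw [hR]; linarith [show 0 ≤ l * ‖x - cν + (2 * t) • cθ‖ by positivity]
  have hR0 : 0 < R := by linarith
  rw [Real.rpow_neg hR0.le, ← div_eq_mul_inv, le_div_iff₀ (by positivity), mul_comm]
  refine le_trans ?_ (h.trans (le_max_left _ _))
  gcongr
  rw [← Real.rpow_natCast]
  exact Real.rpow_le_rpow_of_exponent_le hR1 (Nat.le_ceil M)
end
end
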